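/- arXiv:cmp-lg/9404001 — 2 statements merged into one kernel-verified Lean document; each statement's English description precedes it below -/
import Mathlib

section
/- Double update collapses when the inner adjunction address is not above s (subcases 2 and 3 of case t ≺ t' in the Proposition's proof): For all addresses s, t, t' : List ℕ and foot addresses fA, fB : List ℕ, if t is a proper prefix of t' and t' is not a proper prefix of s, then update (update s fA t) fB (update t' fA t) = update s fA t. -/
/-- Adjunction of an auxiliary tree `A` with foot address `f` at address `t` in tree `E`. -/
def adjoin {σ : Type*} (E A : List ℕ → Option σ) (t f : List ℕ) : List ℕ → Option σ :=
  fun r =>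
    if t <+: r then
      let u := r.drop t.length
      if f <+: u then E (t ++ u.drop f.length) else A u
    else E r

/-- Address update after adjunction of a tree with foot `f` at address `t`. -/
def update (s f t : List ℕ) : List ℕ :=
  if t <+: s ∧ t ≠ s then t ++ f ++ s.drop t.length else s

/-!
Updating addresses along an adjunction at `t` reflects the proper prefix relation: the adjunction
inserts `f` right after `t` in exactly those addresses that extend `t` properly, so it cannot put
one address above another that it was not above before. Hence, if `t'` is not above `s`, the
updated address of `t'` is not above the updated address of `s`, and the second update does nothing.
-/

/-- The strict order `p ≺ q` on tree addresses: the node `p` lies properly above the node `q`.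
It unfolds to the condition tested by `update`. -/
def IsProperPrefix {α : Type*} (p q : List α) : Prop :=
  p <+: q ∧ p ≠ q

namespace IsProperPrefix

variable {α : Type*} {p q r : List α}

theorem exists_append (h : IsProperPrefix p q) : ∃ u, u ≠ [] ∧ p ++ u = q := by
  obtain ⟨⟨u, rfl⟩, hne⟩ := h
  exact ⟨u, by rintro rfl; simp at hne, rfl⟩

theorem self_append {u : List α} (p : List α) (hu : u ≠ []) : IsProperPrefix p (p ++ u) :=
  ⟨List.prefix_append p u, by simpa using hu⟩

theorem append_left_iff (r : List α) :
    IsProperPrefix (r ++ p) (r ++ q) ↔ IsProperPrefix p q := by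
  simp [IsProperPrefix]

theorem of_prefix_left (hpq : p <+: q) (hqr : IsProperPrefix q r) : IsProperPrefix p r := by
  refine ⟨hpq.trans hqr.1, ?_⟩
  rintro rfl
  exact hqr.2 (hqr.1.eq_of_length_le hpq.length_le)

end IsProperPrefix

section Update

variable {p q s t f u : List ℕ}

theorem update_of_not_isProperPrefix (h : ¬ IsProperPrefix t s) : update s f t = s :=
  if_neg h

theorem update_append (hu : u ≠ []) : update (t ++ u) f t = t ++ (f ++ u) := by
  have ht : IsProperPrefix t (t ++ u) := .self_append t hu
  calc
    update (t ++ u) f t = t ++ f ++ (t ++ u).drop t.length := if_pos ht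
    _ = t ++ (f ++ u) := by rw [List.drop_left, List.append_assoc]

theorem prefix_update (h : t <+: s) : t <+: update s f t := by
  unfold update
  split_ifs
  · rw [List.append_assoc]
    exact List.prefix_append t _
  · exact h

theorem IsProperPrefix.of_update (h : IsProperPrefix (update p f t) (update q f t)) :
    IsProperPrefix p q := by
  by_cases htq : IsProperPrefix t q
  · by_cases htp : IsProperPrefix t p
    · obtain ⟨u, hu, rfl⟩ := htp.exists_append
      obtain ⟨v, hv, rfl⟩ := htq.exists_append
      rw [update_append hu, update_append hv] at h
      simpa only [append_left_iff] using h
    · rw [update_of_not_isProperPrefix htp] at h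
      have hpt : p <+: t := by
        obtain hpt | htp' := List.prefix_or_prefix_of_prefix h.1 (prefix_update htq.1)
        · exact hpt
        · rw [of_not_not fun hne ↦ htp ⟨htp', hne⟩]
      exact htq.of_prefix_left hpt
  · rw [update_of_not_isProperPrefix htq] at h
    have htp : ¬ IsProperPrefix t p := fun htp ↦
      htq (h.of_prefix_left (prefix_update htp.1))
    rwa [update_of_not_isProperPrefix htp] at h

end Update

theorem update_update_collapse_general (s t t' fA fB : List ℕ) (h : ¬ IsProperPrefix t' s) :
    update (update s fA t) fB (update t' fA t) = update s fA t :=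
  update_of_not_isProperPrefix fun hlt ↦ h hlt.of_update

/-- Double update collapses when the inner adjunction address is not above s. -/
theorem update_update_collapse (s t t' fA fB : List ℕ)
    (h1 : t <+: t') (h2 : t ≠ t') (h3 : ¬ (t' <+: s ∧ t' ≠ s)) :
    update (update s fA t) fB (update t' fA t) = update s fA t :=
  update_update_collapse_general s t t' fA fB h3
end

section
/- Every independent adjunction is replaceable by a dependent one (claim of Section 2): Let σ be a type, E, A, B : List ℕ → Option σ trees with foot addresses fA, fB, and t : List ℕ an address. Then adjoining A at t in E and then adjoining B at the same address t yields the same tree as adjoining at t in E the single derived auxiliary tree obtained by adjoining B at the root of A: adjoin (adjoin E A t fA) B t fB = adjoin E (adjoin A B [] fB) t (fB ++ fA). (Here adjoin A B [] fB is B adjoined at the root address [] of A, and the foot address of every node of A is shifted to fB ++ fA.) -/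
section Adjoin

variable {σ : Type*} (E A : List ℕ → Option σ)

theorem adjoin_of_not_prefix {t r : List ℕ} (f : List ℕ) (ht : ¬ t <+: r) :
    adjoin E A t f r = E r :=
  if_neg ht

theorem adjoin_append_of_not_prefix {f u : List ℕ} (t : List ℕ) (hf : ¬ f <+: u) :
    adjoin E A t f (t ++ u) = A u := by
  simp [adjoin, hf]

theorem adjoin_append_append (t f u : List ℕ) : adjoin E A t f (t ++ (f ++ u)) = E (t ++ u) := by
  simp [adjoin]

theorem adjoin_append_left (t s f u : List ℕ) :
    adjoin E A (t ++ s) f (t ++ u) = adjoin (fun v ↦ E (t ++ v)) A s f u := by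
  simp only [adjoin, List.prefix_append_right_inj, List.length_append, List.drop_length_add_append,
    List.append_assoc]

end Adjoin

-- The address `s` lies on the path from the root of `A` to its foot `s ++ f`, so adjoining `B`
-- there pushes that foot down by the foot address `g` of `B`.
theorem independent_to_dependent_general {σ : Type*} (E A B : List ℕ → Option σ)
    (t s f g : List ℕ) :
    adjoin (adjoin E A t (s ++ f)) B (t ++ s) g
      = adjoin E (adjoin A B s g) t (s ++ (g ++ f)) := by
  funext r
  by_cases ht : t <+: r
  case neg =>
    have hts : ¬ t ++ s <+: r := mt (List.prefix_append t s).trans ht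
    simp only [adjoin_of_not_prefix _ _ _ hts, adjoin_of_not_prefix _ _ _ ht]
  obtain ⟨u, rfl⟩ := ht
  rw [adjoin_append_left]
  by_cases hsgf : s ++ (g ++ f) <+: u
  case pos =>
    obtain ⟨x, rfl⟩ := hsgf
    rw [adjoin_append_append]
    calc adjoin (fun v ↦ adjoin E A t (s ++ f) (t ++ v)) B s g (s ++ (g ++ f) ++ x)
        = adjoin E A t (s ++ f) (t ++ (s ++ f ++ x)) := by
          simp only [List.append_assoc, adjoin_append_append]
      _ = E (t ++ x) := adjoin_append_append E A t (s ++ f) x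
  rw [adjoin_append_of_not_prefix _ _ _ hsgf]
  by_cases hs : s <+: u
  case neg =>
    have hsf : ¬ s ++ f <+: u := mt (List.prefix_append s f).trans hs
    rw [adjoin_of_not_prefix _ _ _ hs, adjoin_of_not_prefix _ _ _ hs,
      adjoin_append_of_not_prefix _ _ _ hsf]
  obtain ⟨v, rfl⟩ := hs
  by_cases hg : g <+: v
  case neg => simp only [adjoin_append_of_not_prefix _ _ _ hg]
  obtain ⟨w, rfl⟩ := hg
  have hsf : ¬ s ++ f <+: s ++ w := by
    simpa only [List.prefix_append_right_inj] using hsgf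
  rw [adjoin_append_append, adjoin_append_append, adjoin_append_of_not_prefix _ _ _ hsf]

/-- Every independent adjunction is replaceable by a dependent one (Section 2). -/
theorem independent_to_dependent {σ : Type*} (E A B : List ℕ → Option σ)
    (fA fB t : List ℕ) :
    adjoin (adjoin E A t fA) B t fB
      = adjoin E (adjoin A B [] fB) t (fB ++ fA) := by
  simpa only [List.nil_append, List.append_nil] using
    independent_to_dependent_general E A B t [] fA fB
end
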